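/- Let V be a real vector space, ℓ : V → ℝ a linear map, and c : V → ℝ a function satisfying the cocycle equation c(z₁+z₂) = e^{ℓ(z₂)}c(z₁) + c(z₂) for all z₁,z₂ ∈ V. If ℓ ≠ 0, then there exists c₀ ∈ ℝ such that c(z) = c₀(e^{ℓ(z)} − 1) for all z ∈ V. -/

import Mathlib

/-- If ℓ : V → ℝ is a nonzero linear functional and c satisfies the cocycle
equation c(z₁+z₂) = e^{ℓ(z₂)} c(z₁) + c(z₂), then c(z) = c₀(e^{ℓ(z)} - 1) for
some constant c₀. -/
theorem stmt8 (V : Type*) [AddCommGroup V] [Module ℝ V]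
    (ℓ : V →ₗ[ℝ] ℝ) (hℓ : ℓ ≠ 0) (c : V → ℝ)
    (hc : ∀ z₁ z₂ : V, c (z₁ + z₂) = Real.exp (ℓ z₂) * c z₁ + c z₂) :
    ∃ c₀ : ℝ, ∀ z : V, c z = c₀ * (Real.exp (ℓ z) - 1) := by
  obtain ⟨w, hw⟩ : ∃ w, ℓ w ≠ 0 := by
    by_contra h
    push Not at h
    exact hℓ (LinearMap.ext h)
  have hne : Real.exp (ℓ w) - 1 ≠ 0 := by
    intro h
    exact hw (Real.exp_eq_one_iff _ |>.mp (by linarith))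
  refine ⟨c w / (Real.exp (ℓ w) - 1), fun z => ?_⟩
  have h1 := hc z w
  have h2 := hc w z
  rw [add_comm w z] at h2
  rw [div_mul_eq_mul_div, eq_div_iff hne]
  linarith
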